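/- arXiv:math/9805085 — 4 statements merged into one kernel-verified Lean document; each statement's English description precedes it below -/
import Mathlib

section
/- Let (E, ι, q, R) be an orderextension for (G₁, G₀) relative to D. The following are equivalent: (1) there is a group isomorphism φ : E ≅ G₀ × G₁ with φ ∘ ι equal to the inclusion a ↦ (a, 0), with (second projection) ∘ φ = q, and with R = (D ∘ first projection) ∘ φ; (2) there exists a homomorphism s : G₁ → E with q ∘ s = id, im R = im D, and there exists a homomorphism s' : G₁ → E with q ∘ s' = id and im s' ⊆ ker R; (3) there exists a homomorphism s : G₁ → E with q ∘ s = id and R ∘ s = 0. -/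
section TrivialExtension

variable {G₀ G₁ V E : Type*}

theorem exists_section_of_addEquiv_prod [AddZeroClass G₀] [AddZeroClass G₁] [AddZeroClass V]
    [AddZeroClass E] {q : E →+ G₁} {D : G₀ →+ V} {R : E →+ V} (φ : E ≃+ G₀ × G₁)
    (hq : ∀ x, (φ x).2 = q x) (hR : ∀ x, D (φ x).1 = R x) :
    ∃ s : G₁ →+ E, q.comp s = AddMonoidHom.id G₁ ∧ ∀ b, R (s b) = 0 := by
  refine ⟨(φ.symm : G₀ × G₁ →+ E).comp (AddMonoidHom.inr G₀ G₁), ?_, fun b ↦ ?_⟩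
  · ext b
    simp [← hq]
  · simp [← hR]

theorem range_eq_range_of_addEquiv_prod [AddGroup G₀] [AddZeroClass G₁] [AddGroup V] [AddGroup E]
    {D : G₀ →+ V} {R : E →+ V} (φ : E ≃+ G₀ × G₁) (hR : ∀ x, D (φ x).1 = R x) :
    R.range = D.range := by
  apply le_antisymm
  · rintro _ ⟨x, rfl⟩
    exact ⟨(φ x).1, hR x⟩
  · rintro _ ⟨a, rfl⟩
    exact ⟨φ.symm (a, 0), by rw [← hR, φ.apply_symm_apply]⟩

variable [AddCommGroup G₀] [AddCommGroup G₁] [AddCommGroup E]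
  {ι : G₀ →+ E} {q : E →+ G₁} {s : G₁ →+ E}

theorem exists_addEquiv_prod_apply_add_section (hι : Function.Injective ι)
    (hexact : Function.Exact ι q) (hs : q.comp s = AddMonoidHom.id G₁) :
    ∃ φ : E ≃+ G₀ × G₁, ∀ a b, φ (ι a + s b) = (a, b) := by
  have hs_int : q.toIntLinearMap ∘ₗ s.toIntLinearMap = LinearMap.id :=
    LinearMap.ext fun b ↦ DFunLike.congr_fun hs b
  let splitting := Function.Exact.splitSurjectiveEquiv (f := ι.toIntLinearMap)
    (g := q.toIntLinearMap) hexact hι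
  let φ := (splitting ⟨s.toIntLinearMap, hs_int⟩).1
  have symm_inl (a : G₀) : ι a = φ.symm (a, 0) :=
    LinearMap.congr_fun (splitting ⟨s.toIntLinearMap, hs_int⟩).2.1 a
  -- `splitting.symm` sends `φ` to `φ.symm ∘ inr`, so the round trip recovers `s`.
  have symm_inr (b : G₁) : φ.symm (0, b) = s b :=
    LinearMap.congr_fun (congrArg Subtype.val (splitting.symm_apply_apply ⟨_, hs_int⟩)) b
  refine ⟨φ.toAddEquiv, fun a b ↦ ?_⟩
  change φ (ι a + s b) = (a, b)
  rw [symm_inl, ← symm_inr, ← map_add, φ.apply_symm_apply, Prod.mk_add_mk, add_zero, zero_add]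

theorem exists_addEquiv_prod_of_section [AddZeroClass V] {D : G₀ →+ V} {R : E →+ V}
    (hι : Function.Injective ι) (hexact : Function.Exact ι q) (hRι : R.comp ι = D)
    (hs : q.comp s = AddMonoidHom.id G₁) (hRs : ∀ b, R (s b) = 0) :
    ∃ φ : E ≃+ G₀ × G₁, (∀ a, φ (ι a) = (a, 0)) ∧ (∀ x, (φ x).2 = q x) ∧
      ∀ x, D (φ x).1 = R x := by
  obtain ⟨φ, hφ⟩ := exists_addEquiv_prod_apply_add_section hι hexact hs
  have decomposition (x : E) : ι (φ x).1 + s (φ x).2 = x := φ.injective (hφ _ _)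
  have hqs (b : G₁) : q (s b) = b := DFunLike.congr_fun hs b
  refine ⟨φ, fun a ↦ ?_, fun x ↦ ?_, fun x ↦ ?_⟩
  · simpa only [map_zero, add_zero] using hφ a 0
  · calc
      (φ x).2 = q (ι (φ x).1 + s (φ x).2) := by
        rw [map_add, hexact.apply_apply_eq_zero, hqs, zero_add]
      _ = q x := by rw [decomposition]
  · calc
      D (φ x).1 = R (ι (φ x).1 + s (φ x).2) := by
        rw [map_add, hRs, add_zero, ← hRι, AddMonoidHom.comp_apply]
      _ = R x := by rw [decomposition]

theorem exists_addEquiv_prod_iff_exists_section [AddZeroClass V] {D : G₀ →+ V} {R : E →+ V}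
    (hι : Function.Injective ι) (hexact : Function.Exact ι q) (hRι : R.comp ι = D) :
    (∃ φ : E ≃+ G₀ × G₁, (∀ a, φ (ι a) = (a, 0)) ∧ (∀ x, (φ x).2 = q x) ∧
        ∀ x, D (φ x).1 = R x) ↔
      ∃ s : G₁ →+ E, q.comp s = AddMonoidHom.id G₁ ∧ ∀ b, R (s b) = 0 :=
  ⟨fun ⟨φ, _, hq, hR⟩ ↦ exists_section_of_addEquiv_prod φ hq hR,
    fun ⟨_, hs, hRs⟩ ↦ exists_addEquiv_prod_of_section hι hexact hRι hs hRs⟩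

end TrivialExtension

/-- Proposition 2.5: characterization of the trivial orderextension. -/
theorem orderextension_trivial_tfae
    {G₀ G₁ V E : Type*} [AddCommGroup G₀] [AddCommGroup G₁] [AddCommGroup V] [AddCommGroup E]
    (ι : G₀ →+ E) (hι : Function.Injective ι)
    (q : E →+ G₁) (hq : Function.Surjective q)
    (hexact : q.ker = ι.range)
    (D : G₀ →+ V) (R : E →+ V) (hRι : R.comp ι = D) :
    ((∃ φ : E ≃+ G₀ × G₁, (∀ a : G₀, φ (ι a) = (a, 0)) ∧ (∀ x : E, (φ x).2 = q x) ∧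
        (∀ x : E, D ((φ x).1) = R x) ) ↔
      ((∃ s : G₁ →+ E, q.comp s = AddMonoidHom.id G₁) ∧
        R.range = D.range ∧
        (∃ s' : G₁ →+ E, q.comp s' = AddMonoidHom.id G₁ ∧ ∀ b : G₁, R (s' b) = 0))) ∧
    (((∃ s : G₁ →+ E, q.comp s = AddMonoidHom.id G₁) ∧
        R.range = D.range ∧
        (∃ s' : G₁ →+ E, q.comp s' = AddMonoidHom.id G₁ ∧ ∀ b : G₁, R (s' b) = 0)) ↔
      (∃ s : G₁ →+ E, q.comp s = AddMonoidHom.id G₁ ∧ ∀ b : G₁, R (s b) = 0)) := by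
  have trivial_iff := exists_addEquiv_prod_iff_exists_section hι
    (AddMonoidHom.exact_iff.mpr hexact) hRι
  refine ⟨trivial_iff.trans (Iff.symm ?conditions_iff), ?conditions_iff⟩
  refine ⟨fun h ↦ h.2.2, fun hsection ↦ ?_⟩
  obtain ⟨φ, _, _, hφR⟩ := trivial_iff.mpr hsection
  exact ⟨hsection.imp fun _ hs ↦ hs.1, range_eq_range_of_addEquiv_prod φ hφR, hsection⟩
end

section
/- Let A be a unital C*-algebra and τ : A → ℂ a continuous linear functional with τ(ab) = τ(ba) for all a, b ∈ A. Let w : ℝ → A be continuously differentiable on [0,1] with derivative w', such that w(t) is unitary and ‖w(t) − 1‖ < 2 for all t ∈ [0,1], and w(0) = w(1). Then ∫₀¹ τ(w'(t) · (w(t))*) dt = 0; that is, the winding integral relative to τ of a closed loop of unitaries staying in the open ball of radius 2 around 1 vanishes. -/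
/-!
Contract the loop `w` to `1` along the segments `1 + s • (w t - 1)`. They consist of units because
`w t` has no spectrum on the half-line `(-∞, 0]`. Write `v = w - 1` and `R = (1 + s • v)⁻¹`. The
identity `1 - s • v * R = R` shows that `s • R` has `s`-derivative `R * R` and that `v * R` has
`t`-derivative `R * v' * R`. For tracial `τ` the function `τ (v' * (R * R))` of `(t, s)` therefore
has primitives in both variables, and by Fubini its integral over the square is at once the winding
integral and the integral over `s` of the increments of `τ (v * R)` around the loop, which vanish.
-/

open Set MeasureTheory
open scoped Ring Interval

theorem one_sub_mul_ringInverse_one_add {R : Type*} [Ring R] {x : R} (hx : IsUnit (1 + x)) :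
    1 - x * (1 + x)⁻¹ʳ = (1 + x)⁻¹ʳ := by
  rw [sub_eq_iff_eq_add, ← one_add_mul, Ring.mul_inverse_cancel _ hx]

theorem ringInverse_eq_star_of_mem_unitary {R : Type*} [Semiring R] [StarMul R] {u : R}
    (hu : u ∈ unitary R) : u⁻¹ʳ = star u :=
  Ring.inverse_unit (Unitary.toUnits ⟨u, hu⟩)

theorem isUnit_one_add_smul_sub_one {𝕜 A : Type*} [Field 𝕜] [LinearOrder 𝕜]
    [IsStrictOrderedRing 𝕜] [Ring A] [Algebra 𝕜 A] {a : A} (ha : spectrum 𝕜 a ⊆ Ioi 0)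
    {s : 𝕜} (hs : s ∈ Icc 0 1) : IsUnit (1 + s • (a - 1)) := by
  rcases hs.1.eq_or_lt with rfl | hs_pos
  · simp
  have hr : (s - 1) / s ≤ 0 := div_nonpos_of_nonpos_of_nonneg (sub_nonpos.2 hs.2) hs.1
  have hunit : IsUnit (algebraMap 𝕜 A ((s - 1) / s) - a) :=
    spectrum.notMem_iff.1 fun hmem ↦ hr.not_gt (ha hmem)
  have hfactor : 1 + s • (a - 1) = -(s • (algebraMap 𝕜 A ((s - 1) / s) - a)) := by
    rw [Algebra.algebraMap_eq_smul_one]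
    match_scalars <;> field
  rw [hfactor]
  exact (hunit.smul (Units.mk0 s hs_pos.ne')).neg

theorem spectrum_real_subset_Ioi_of_mem_unitary {A : Type*} [CStarAlgebra A] {u : A}
    (hu : u ∈ unitary A) (hnorm : ‖u - 1‖ < 2) : spectrum ℝ u ⊆ Ioi 0 := fun _ hr ↦
  Complex.ofReal_mem_slitPlane.1 <|
    (Unitary.spectrum_subset_slitPlane_iff_norm_lt_two hu).2 hnorm (spectrum.algebraMap_mem ℂ hr)

section RingInverse

variable {A : Type*} [NormedRing A] [HasSummableGeomSeries A]

theorem continuousOn_ringInverse_comp {X : Type*} [TopologicalSpace X] {f : X → A} {S : Set X}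
    (hf : ContinuousOn f S) (hunit : ∀ x ∈ S, IsUnit (f x)) :
    ContinuousOn (fun x ↦ (f x)⁻¹ʳ) S := fun x hx ↦
  ContinuousAt.comp_continuousWithinAt (g := Ring.inverse)
    (NormedRing.inverse_continuousAt (hunit x hx).unit) (hf x hx)

variable {𝕜 : Type*} [NontriviallyNormedField 𝕜] [NormedAlgebra 𝕜 A]

theorem hasDerivAt_ringInverse_comp {f : 𝕜 → A} {f' : A} {x : 𝕜} (hf : HasDerivAt f f' x)
    (hunit : IsUnit (f x)) :
    HasDerivAt (fun y ↦ (f y)⁻¹ʳ) (-((f x)⁻¹ʳ * f' * (f x)⁻¹ʳ)) x := by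
  have hinv := hasFDerivAt_ringInverse (𝕜 := 𝕜) hunit.unit
  rw [← Ring.inverse_unit hunit.unit] at hinv
  simpa using! HasFDerivAt.comp_hasDerivAt x (l := Ring.inverse) hinv hf

theorem hasDerivAt_smul_ringInverse_one_add_smul {v : A} {s : 𝕜} (hunit : IsUnit (1 + s • v)) :
    HasDerivAt (fun r : 𝕜 ↦ r • (1 + r • v)⁻¹ʳ) ((1 + s • v)⁻¹ʳ * (1 + s • v)⁻¹ʳ) s := by
  have hline : HasDerivAt (fun r : 𝕜 ↦ 1 + r • v) v s := by
    simpa using ((hasDerivAt_id s).smul_const v).const_add 1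
  convert! (hasDerivAt_id s).smul (hasDerivAt_ringInverse_comp hline hunit) using 1
  have hR := one_sub_mul_ringInverse_one_add hunit
  set R := (1 + s • v)⁻¹ʳ
  calc R * R = R * (1 - s • v * R) := by rw [hR]
    _ = s • -(R * v * R) + (1 : 𝕜) • R := by
      simp only [mul_sub, mul_one, smul_mul_assoc, mul_smul_comm, smul_neg, one_smul, mul_assoc]
      abel

theorem hasDerivAt_mul_ringInverse_one_add_smul {v : 𝕜 → A} {v' : A} {t : 𝕜} (s : 𝕜)
    (hv : HasDerivAt v v' t) (hunit : IsUnit (1 + s • v t)) :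
    HasDerivAt (fun x ↦ v x * (1 + s • v x)⁻¹ʳ)
      ((1 + s • v t)⁻¹ʳ * v' * (1 + s • v t)⁻¹ʳ) t := by
  have hinv := hasDerivAt_ringInverse_comp ((hv.const_smul s).const_add 1) hunit
  convert! hv.mul hinv using 1
  have hR := one_sub_mul_ringInverse_one_add hunit
  set R := (1 + s • v t)⁻¹ʳ
  calc R * v' * R = (1 - s • v t * R) * v' * R := by rw [hR]
    _ = v' * R + v t * -(R * s • v' * R) := by
      simp only [sub_mul, one_mul, smul_mul_assoc, mul_smul_comm, mul_neg, mul_assoc]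
      abel

end RingInverse

theorem integral_sub_eq_integral_sub_of_hasDerivAt {E : Type*} [NormedAddCommGroup E]
    [NormedSpace ℝ E] [CompleteSpace E] {f P Q : ℝ → ℝ → E} {a b c d : ℝ}
    (hf : ContinuousOn f.uncurry ([[a, b]] ×ˢ [[c, d]]))
    (hP : ∀ t ∈ [[a, b]], ∀ s ∈ [[c, d]], HasDerivAt (fun r ↦ P t r) (f t s) s)
    (hQ : ∀ t ∈ [[a, b]], ∀ s ∈ [[c, d]], HasDerivAt (fun r ↦ Q r s) (f t s) t) :
    ∫ t in a..b, (P t d - P t c) = ∫ s in c..d, (Q b s - Q a s) := by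
  have hint : IntegrableOn f.uncurry (Ι a b ×ˢ Ι c d) :=
    (hf.integrableOn_compact (isCompact_uIcc.prod isCompact_uIcc)).mono_set
      (prod_mono uIoc_subset_uIcc uIoc_subset_uIcc)
  calc ∫ t in a..b, (P t d - P t c)
      = ∫ t in a..b, ∫ s in c..d, f t s := intervalIntegral.integral_congr fun t ht ↦
        (intervalIntegral.integral_eq_sub_of_hasDerivAt (hP t ht)
          (hf.uncurry_left t ht).intervalIntegrable).symm
    _ = ∫ s in c..d, ∫ t in a..b, f t s := intervalIntegral_intervalIntegral_swap hint
    _ = ∫ s in c..d, (Q b s - Q a s) := intervalIntegral.integral_congr fun s hs ↦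
        intervalIntegral.integral_eq_sub_of_hasDerivAt (fun t ht ↦ hQ t ht s hs)
          (hf.uncurry_right s hs).intervalIntegrable

theorem winding_integral_small_loop_vanishes_general
    {A E : Type*} [NormedRing A] [HasSummableGeomSeries A] [NormedAlgebra ℝ A]
    [NormedAddCommGroup E] [NormedSpace ℝ E] [CompleteSpace E]
    (τ : A →L[ℝ] E) (hτ : ∀ x y : A, τ (x * y) = τ (y * x))
    {a b : ℝ} {w w' : ℝ → A}
    (hderiv : ∀ t ∈ [[a, b]], HasDerivAt w (w' t) t)
    (hcont : ContinuousOn w' [[a, b]])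
    (hspec : ∀ t ∈ [[a, b]], spectrum ℝ (w t) ⊆ Ioi 0)
    (hclosed : w a = w b) :
    ∫ t in a..b, τ (w' t * (w t)⁻¹ʳ) = 0 := by
  let R : ℝ → ℝ → A := fun t s ↦ (1 + s • (w t - 1))⁻¹ʳ
  have hunit : ∀ t ∈ [[a, b]], ∀ s ∈ [[(0 : ℝ), 1]], IsUnit (1 + s • (w t - 1)) := fun t ht s hs ↦
    isUnit_one_add_smul_sub_one (hspec t ht) (uIcc_of_le (zero_le_one' ℝ) ▸ hs)
  have hw'_fst : ContinuousOn (fun p : ℝ × ℝ ↦ w' p.1) ([[a, b]] ×ˢ [[0, 1]]) :=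
    hcont.comp continuousOn_fst fun _ hp ↦ hp.1
  have hw_fst : ContinuousOn (fun p : ℝ × ℝ ↦ w p.1) ([[a, b]] ×ˢ [[0, 1]]) :=
    (HasDerivAt.continuousOn hderiv).comp continuousOn_fst fun _ hp ↦ hp.1
  have hsegment : ContinuousOn (fun p : ℝ × ℝ ↦ 1 + p.2 • (w p.1 - 1)) ([[a, b]] ×ˢ [[0, 1]]) :=
    continuousOn_const.add (continuousOn_snd.smul (hw_fst.sub continuousOn_const))
  have hR : ContinuousOn R.uncurry ([[a, b]] ×ˢ [[0, 1]]) :=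
    continuousOn_ringInverse_comp hsegment fun p hp ↦ hunit p.1 hp.1 p.2 hp.2
  let f : ℝ → ℝ → E := fun t s ↦ τ (w' t * (R t s * R t s))
  have hf : ContinuousOn f.uncurry ([[a, b]] ×ˢ [[0, 1]]) :=
    τ.continuous.comp_continuousOn (hw'_fst.mul (hR.mul hR))
  have hf_primitive_right : ∀ t ∈ [[a, b]], ∀ s ∈ [[0, 1]],
      HasDerivAt (fun r ↦ τ (w' t * r • R t r)) (f t s) s := fun t ht s hs ↦
    τ.hasFDerivAt.comp_hasDerivAt s
      ((hasDerivAt_smul_ringInverse_one_add_smul (hunit t ht s hs)).const_mul (w' t))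
  have hf_primitive_left : ∀ t ∈ [[a, b]], ∀ s ∈ [[0, 1]],
      HasDerivAt (fun r ↦ τ ((w r - 1) * R r s)) (f t s) t := fun t ht s hs ↦ by
    have htrace : f t s = τ (R t s * w' t * R t s) := by
      rw [mul_assoc, ← hτ, mul_assoc]
    rw [htrace]
    exact τ.hasFDerivAt.comp_hasDerivAt t (hasDerivAt_mul_ringInverse_one_add_smul s
      ((hderiv t ht).sub_const 1) (hunit t ht s hs))
  have hincrements :=
    integral_sub_eq_integral_sub_of_hasDerivAt hf hf_primitive_right hf_primitive_left
  simpa [R, hclosed] using hincrements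

/-- Used in Lemmas 2.1 and 3.6: the winding integral relative to a tracial continuous
linear functional of a closed continuously differentiable loop of unitaries staying in the
open ball of radius 2 around 1 vanishes. -/
theorem winding_integral_small_loop_vanishes
    {A : Type*} [CStarAlgebra A]
    (τ : A →L[ℂ] ℂ) (hτ : ∀ a b : A, τ (a * b) = τ (b * a))
    (w w' : ℝ → A)
    (hderiv : ∀ t ∈ Set.Icc (0 : ℝ) 1, HasDerivAt w (w' t) t)
    (hcont : ContinuousOn w' (Set.Icc (0 : ℝ) 1))
    (hunit : ∀ t ∈ Set.Icc (0 : ℝ) 1, w t ∈ unitary A)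
    (hnorm : ∀ t ∈ Set.Icc (0 : ℝ) 1, ‖w t - 1‖ < 2)
    (hclosed : w 0 = w 1) :
    ∫ t in (0 : ℝ)..1, τ (w' t * star (w t)) = 0 := by
  rw [← uIcc_of_le (zero_le_one' ℝ)] at hderiv hcont hunit hnorm
  rw [← winding_integral_small_loop_vanishes_general (τ.restrictScalars ℝ) hτ hderiv hcont
    (fun t ht ↦ spectrum_real_subset_Ioi_of_mem_unitary (hunit t ht) (hnorm t ht)) hclosed]
  exact intervalIntegral.integral_congr fun t ht ↦
    congrArg (fun x ↦ τ (w' t * x)) (ringInverse_eq_star_of_mem_unitary (hunit t ht)).symm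
end

section
/- Let G₀, G₁, V be abelian groups and D : G₀ → V a homomorphism. For a homomorphism φ : G₁ → V, define R_φ : G₀ × G₁ → V by R_φ(a, b) := D(a) + φ(b). Then for homomorphisms φ, ψ : G₁ → V, the following are equivalent: (1) there exists a group isomorphism μ : G₀ × G₁ ≅ G₀ × G₁ with μ(a, 0) = (a, 0) for all a ∈ G₀, (second projection) ∘ μ = second projection, and R_ψ ∘ μ = R_φ; (2) there exists a homomorphism h : G₁ → G₀ with φ(b) = ψ(b) + D(h(b)) for all b ∈ G₁. -/
/-!
An endomorphism of the trivial extension `G₀ × G₁` that restricts to the identity on `G₀` and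
induces the identity on `G₁` is a shear `(a, b) ↦ (a + h b, b)` for a unique homomorphism
`h : G₁ → G₀`. Pulling back `R_ψ` along this shear gives `(a, b) ↦ D a + (ψ b + D (h b))`, which is
`R_φ` exactly when `φ = ψ + D ∘ h`.
-/

section Shear

variable {G₀ G₁ V : Type*} [AddCommGroup G₀] [AddZeroClass G₁] [AddCommMonoid V]

/-- The shear automorphism `(a, b) ↦ (a + h b, b)` of `G₀ × G₁`. These are precisely the
automorphisms of the trivial extension of `G₁` by `G₀`. -/
def shear (h : G₁ →+ G₀) : G₀ × G₁ ≃+ G₀ × G₁ where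
  toFun x := (x.1 + h x.2, x.2)
  invFun x := (x.1 - h x.2, x.2)
  left_inv x := by simp
  right_inv x := by simp
  map_add' x y := by simp [add_add_add_comm]

@[simp]
theorem shear_apply (h : G₁ →+ G₀) (x : G₀ × G₁) : shear h x = (x.1 + h x.2, x.2) :=
  rfl

theorem exists_eq_shear_iff (μ : G₀ × G₁ ≃+ G₀ × G₁) :
    (∃ h, μ = shear h) ↔ (∀ a, μ (a, 0) = (a, 0)) ∧ ∀ x, (μ x).2 = x.2 := by
  constructor
  · rintro ⟨h, rfl⟩
    simp
  · rintro ⟨fixes_fst, preserves_snd⟩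
    let h : G₁ →+ G₀ :=
      (AddMonoidHom.fst G₀ G₁).comp (μ.toAddMonoidHom.comp (AddMonoidHom.inr G₀ G₁))
    have map_inr (b : G₁) : μ (0, b) = (h b, b) := Prod.ext rfl (preserves_snd (0, b))
    refine ⟨h, AddEquiv.ext fun ⟨a, b⟩ => ?_⟩
    calc
      μ (a, b) = μ (a, 0) + μ (0, b) := by simp [← map_add]
      _ = shear h (a, b) := by simp [fixes_fst, map_inr]

theorem coprod_comp_shear (D : G₀ →+ V) (ψ : G₁ →+ V) (h : G₁ →+ G₀) :
    (D.coprod ψ).comp (shear h).toAddMonoidHom = D.coprod (ψ + D.comp h) := by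
  ext x
  simp [add_assoc, add_comm (ψ _)]

theorem coprod_right_injective (D : G₀ →+ V) :
    Function.Injective fun φ : G₁ →+ V => D.coprod φ := fun φ ψ h => by
  simpa using congrArg (fun R => R.comp (AddMonoidHom.inr G₀ G₁)) h

theorem coprod_comp_shear_eq_coprod_iff (D : G₀ →+ V) (φ ψ : G₁ →+ V) (h : G₁ →+ G₀) :
    (D.coprod ψ).comp (shear h).toAddMonoidHom = D.coprod φ ↔ φ = ψ + D.comp h := by
  rw [coprod_comp_shear, (coprod_right_injective D).eq_iff, eq_comm]

theorem trivial_orderextension_iso_iff_general (D : G₀ →+ V) (φ ψ : G₁ →+ V) :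
    (∃ μ : G₀ × G₁ ≃+ G₀ × G₁,
        (∀ a : G₀, μ (a, 0) = (a, 0)) ∧
        (∀ x : G₀ × G₁, (μ x).2 = x.2) ∧
        (∀ x : G₀ × G₁, D ((μ x).1) + ψ ((μ x).2) = D x.1 + φ x.2)) ↔
      (∃ h : G₁ →+ G₀, ∀ b : G₁, φ b = ψ b + D (h b)) := by
  calc
    _ ↔ ∃ μ : G₀ × G₁ ≃+ G₀ × G₁, (∃ h, μ = shear h) ∧
          (D.coprod ψ).comp μ.toAddMonoidHom = D.coprod φ := by
      simp only [exists_eq_shear_iff, and_assoc, AddMonoidHom.ext_iff]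
      rfl
    _ ↔ ∃ h : G₁ →+ G₀, (D.coprod ψ).comp (shear h).toAddMonoidHom = D.coprod φ := by
      simp only [← exists_and_right, exists_comm (α := G₀ × G₁ ≃+ G₀ × G₁), exists_eq_left]
    _ ↔ ∃ h : G₁ →+ G₀, φ = ψ + D.comp h := by
      simp only [coprod_comp_shear_eq_coprod_iff]
    _ ↔ _ := by
      simp only [AddMonoidHom.ext_iff, AddMonoidHom.add_apply, AddMonoidHom.comp_apply]

end Shear

/-- From the proof of Proposition 4.3: the trivial-extension orderextensions `(G₀ × G₁, R_φ)`
and `(G₀ × G₁, R_ψ)`, where `R_φ (a, b) = D a + φ b`, are isomorphic if and only if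
`φ = ψ + D ∘ h` for some homomorphism `h : G₁ → G₀`. -/
theorem trivial_orderextension_iso_iff
    {G₀ G₁ V : Type*} [AddCommGroup G₀] [AddCommGroup G₁] [AddCommGroup V]
    (D : G₀ →+ V) (φ ψ : G₁ →+ V) :
    (∃ μ : G₀ × G₁ ≃+ G₀ × G₁,
        (∀ a : G₀, μ (a, 0) = (a, 0)) ∧
        (∀ x : G₀ × G₁, (μ x).2 = x.2) ∧
        (∀ x : G₀ × G₁, D ((μ x).1) + ψ ((μ x).2) = D x.1 + φ x.2)) ↔
      (∃ h : G₁ →+ G₀, ∀ b : G₁, φ b = ψ b + D (h b)) :=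
  trivial_orderextension_iso_iff_general D φ ψ
end

section
/- Let C be an abelian group and, for each n ∈ ℕ, let K_n be an abelian group with homomorphisms χ_n : K_n → K_{n+1} and ψ_n : K_n → C. Set E_n := C × K_n with connecting homomorphisms μ_n : E_n → E_{n+1}, μ_n(a, b) := (a + ψ_n(b), χ_n(b)). Let E and K denote the direct limits of the systems (E_n, μ_n) and (K_n, χ_n), let q : E → K be the homomorphism induced by the second projections, and note that a ↦ (class of (a, 0) in E) defines an injective homomorphism C → E whose image is ker q. If there exists a homomorphism φ : K → E with q ∘ φ = id (i.e., the limit extension 0 → C → E → K → 0 splits), then there exist homomorphisms h_n : K_n → C with ψ_n = h_n − h_{n+1} ∘ χ_n for all n. -/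
section

/-- The transition map `K i →+ K j` obtained by iterating maps `χ n : K n →+ K (n+1)`. -/
def connect {K : ℕ → Type*} [∀ n, AddCommGroup (K n)] (χ : ∀ n, K n →+ K (n + 1))
    (i j : ℕ) (h : i ≤ j) : K i →+ K j :=
  Nat.leRecOn (C := fun m => K i →+ K m) h (fun {k} g => (χ k).comp g) (AddMonoidHom.id (K i))

/-- The connecting homomorphism `μ_n : C × K n →+ C × K (n+1)`,
`μ_n (a, b) = (a + ψ n b, χ n b)`. -/
def twistMap {C : Type*} [AddCommGroup C] {K : ℕ → Type*} [∀ n, AddCommGroup (K n)]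
    (χ : ∀ n, K n →+ K (n + 1)) (ψ : ∀ n, K n →+ C) (n : ℕ) : C × K n →+ C × K (n + 1) where
  toFun x := (x.1 + ψ n x.2, χ n x.2)
  map_zero' := by simp
  map_add' x y := by
    simp only [Prod.fst_add, Prod.snd_add, map_add, Prod.mk_add_mk, Prod.mk.injEq]
    refine ⟨by abel, by simp⟩

/-!
Let `limitInl : C → E` send `a` to the common class of the pairs `(a, 0)`, which `μ` leaves fixed.
The extension `0 → C → E → K → 0` is exact because `μ` lies over `χ`: a class with trivial image
in `K` is represented, far enough along the system, by some `(a, 0)`. By the splitting lemma a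
section of `q` yields a retraction `r : E → C` of `limitInl`, and `h n b := r [(0, b)]` works: in
`E`, the class of `(0, b)` at stage `n` is that of `(ψ n b, χ n b) = (ψ n b, 0) + (0, χ n b)` at
stage `n + 1`.
-/

theorem exists_retraction_of_exact_of_section {A B D : Type*} [AddCommGroup A] [AddCommGroup B]
    [AddCommGroup D] {f : A →+ B} {g : B →+ D} (hfg : Function.Exact f g)
    (hf : Function.Injective f) {s : D →+ B} (hs : g.comp s = AddMonoidHom.id D) :
    ∃ r : B →+ A, ∀ a, r (f a) = a := by
  have hfg' : Function.Exact f.toIntLinearMap g.toIntLinearMap := hfg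
  have hs' : g.toIntLinearMap ∘ₗ s.toIntLinearMap = LinearMap.id :=
    LinearMap.ext fun d => DFunLike.congr_fun hs d
  have section_iff_retraction := hfg'.split_tfae'.out 0 1
  obtain ⟨-, r, hr⟩ := section_iff_retraction.1 ⟨hf, s.toIntLinearMap, hs'⟩
  exact ⟨r.toAddMonoidHom, fun a => DFunLike.congr_fun hr a⟩

section Connect

variable {G H : ℕ → Type*} [∀ n, AddCommGroup (G n)] [∀ n, AddCommGroup (H n)]
  (γ : ∀ n, G n →+ G (n + 1)) (η : ∀ n, H n →+ H (n + 1))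

theorem connect_self (i : ℕ) (x : G i) : connect γ i i le_rfl x = x := by
  rw [connect, Nat.leRecOn_self, AddMonoidHom.id_apply]

theorem connect_succ {i j : ℕ} (hij : i ≤ j) (x : G i) :
    connect γ i (j + 1) (Nat.le_succ_of_le hij) x = γ j (connect γ i j hij x) := by
  rw [connect, Nat.leRecOn_succ hij, AddMonoidHom.comp_apply, connect]

instance connect_directedSystem : DirectedSystem G fun i j hij => connect γ i j hij where
  map_self i x := connect_self γ i x
  map_map k j i hij hjk x := by
    induction k, hjk using Nat.le_induction with
    | base => rw [connect_self]
    | succ k hjk ih => rw [connect_succ γ hjk, connect_succ γ (hij.trans hjk), ih]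

theorem connect_apply_of_forall_succ {x : ∀ n, G n} (hx : ∀ n, γ n (x n) = x (n + 1))
    {i j : ℕ} (hij : i ≤ j) : connect γ i j hij (x i) = x j := by
  induction j, hij using Nat.le_induction with
  | base => rw [connect_self]
  | succ j hij ih => rw [connect_succ γ hij, ih, hx]

theorem map_connect_of_forall_succ {f : ∀ n, G n → H n}
    (hf : ∀ n x, f (n + 1) (γ n x) = η n (f n x)) {i j : ℕ} (hij : i ≤ j) (x : G i) :
    f j (connect γ i j hij x) = connect η i j hij (f i x) := by
  induction j, hij using Nat.le_induction with
  | base => rw [connect_self, connect_self]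
  | succ j hij ih => rw [connect_succ γ hij, connect_succ η hij, hf, ih]

theorem directLimit_of_succ (n : ℕ) (x : G n) :
    AddCommGroup.DirectLimit.of G (connect γ) (n + 1) (γ n x) =
      AddCommGroup.DirectLimit.of G (connect γ) n x := by
  rw [← AddCommGroup.DirectLimit.of_f (Nat.le_succ n) x, connect_succ γ le_rfl, connect_self]

end Connect

section LimitExtension

variable {C : Type*} [AddCommGroup C] {K : ℕ → Type*} [∀ n, AddCommGroup (K n)]
  (χ : ∀ n, K n →+ K (n + 1)) (ψ : ∀ n, K n →+ C)

/-- The middle group `E` of the limit extension: the direct limit of the groups `C × K n` along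
the maps `twistMap χ ψ n`. -/
abbrev LimitExtension : Type _ :=
  AddCommGroup.DirectLimit (fun n => C × K n) (connect (twistMap χ ψ))

/-- The canonical homomorphism `C × K n → E` from the `n`-th stage to the limit extension. -/
noncomputable abbrev limitOf (n : ℕ) : C × K n →+ LimitExtension χ ψ :=
  AddCommGroup.DirectLimit.of (fun n => C × K n) (connect (twistMap χ ψ)) n

/-- The inclusion `C → E` of the limit extension, `a ↦ [(a, 0)]`. The representative is taken at
stage `0`; by `limitOf_inl` every other stage gives the same class. -/
noncomputable def limitInl : C →+ LimitExtension χ ψ :=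
  (limitOf χ ψ 0).comp (AddMonoidHom.inl C (K 0))

theorem connect_twistMap_inl {i j : ℕ} (hij : i ≤ j) (a : C) :
    connect (twistMap χ ψ) i j hij (a, 0) = (a, 0) :=
  connect_apply_of_forall_succ (twistMap χ ψ) (x := fun _ => (a, 0)) (by simp [twistMap]) hij

theorem snd_connect_twistMap {i j : ℕ} (hij : i ≤ j) (x : C × K i) :
    (connect (twistMap χ ψ) i j hij x).2 = connect χ i j hij x.2 :=
  map_connect_of_forall_succ (twistMap χ ψ) χ (f := fun _ => Prod.snd) (fun _ _ => rfl) hij x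

theorem limitOf_connect {i j : ℕ} (hij : i ≤ j) (x : C × K i) :
    limitOf χ ψ j (connect (twistMap χ ψ) i j hij x) = limitOf χ ψ i x :=
  AddCommGroup.DirectLimit.of_f (G := fun n => C × K n) hij x

theorem limitOf_inl (n : ℕ) (a : C) : limitOf χ ψ n (a, 0) = limitInl χ ψ a := by
  rw [← connect_twistMap_inl χ ψ n.zero_le a, limitOf_connect]
  rfl

theorem limitInl_injective : Function.Injective (limitInl χ ψ) := by
  refine (injective_iff_map_eq_zero _).2 fun a ha => ?_
  obtain ⟨j, hj, hzero⟩ := AddCommGroup.DirectLimit.of.zero_exact _ _ ha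
  exact congrArg Prod.fst ((connect_twistMap_inl χ ψ hj a).symm.trans hzero)

theorem limitOf_inr (n : ℕ) (b : K n) :
    limitOf χ ψ n (0, b) = limitInl χ ψ (ψ n b) + limitOf χ ψ (n + 1) (0, χ n b) := by
  have twistMap_inr : twistMap χ ψ n (0, b) = (ψ n b, 0) + (0, χ n b) := by simp [twistMap]
  rw [← directLimit_of_succ (twistMap χ ψ), twistMap_inr, map_add, limitOf_inl]

variable {χ ψ}

theorem limitInl_exact {q : LimitExtension χ ψ →+ AddCommGroup.DirectLimit K (connect χ)}
    (hq : ∀ (n : ℕ) (x : C × K n),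
      q (limitOf χ ψ n x) = AddCommGroup.DirectLimit.of K (connect χ) n x.2) :
    Function.Exact (limitInl χ ψ) q := by
  refine fun y => ⟨fun hy => ?_, ?_⟩
  · induction y using AddCommGroup.DirectLimit.induction_on with
    | ih n x =>
      obtain ⟨j, hj, hzero⟩ := AddCommGroup.DirectLimit.of.zero_exact _ _ ((hq n x).symm.trans hy)
      rw [← snd_connect_twistMap χ ψ hj] at hzero
      refine ⟨(connect (twistMap χ ψ) n j hj x).1, ?_⟩
      rw [← limitOf_inl χ ψ j, ← limitOf_connect χ ψ hj x, ← hzero]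
  · rintro ⟨a, rfl⟩
    exact (hq 0 (a, 0)).trans (map_zero _)

theorem exists_cobounding_of_retraction {r : LimitExtension χ ψ →+ C}
    (hr : ∀ a, r (limitInl χ ψ a) = a) :
    ∃ h : ∀ n, K n →+ C, ∀ (n : ℕ) (b : K n), ψ n b = h n b - h (n + 1) (χ n b) := by
  refine ⟨fun n => (r.comp (limitOf χ ψ n)).comp (AddMonoidHom.inr C (K n)),
    fun n b => eq_sub_of_add_eq ?_⟩
  calc ψ n b + r (limitOf χ ψ (n + 1) (0, χ n b))
      = r (limitInl χ ψ (ψ n b) + limitOf χ ψ (n + 1) (0, χ n b)) := by rw [map_add, hr]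
    _ = r (limitOf χ ψ n (0, b)) := by rw [← limitOf_inr]

end LimitExtension

/-- Proof of Lemma 3.7: if the direct limit extension `0 → C → E → K → 0` of the system
`E n = C × K n`, `μ n (a, b) = (a + ψ n b, χ n b)` splits, then there are homomorphisms
`h n : K n →+ C` with `ψ n = h n − h (n+1) ∘ χ n`.  (Here `a ↦ class of (a, 0)` is an
injective homomorphism `C → E` whose image is the kernel of the projection `q : E → K`.) -/
theorem split_limit_extension_gives_cobounding
    {C : Type*} [AddCommGroup C] {K : ℕ → Type*} [∀ n, AddCommGroup (K n)]
    (χ : ∀ n, K n →+ K (n + 1)) (ψ : ∀ n, K n →+ C)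
    (q : AddCommGroup.DirectLimit (fun n => C × K n) (connect (twistMap χ ψ)) →+
          AddCommGroup.DirectLimit K (connect χ))
    (hq : ∀ (n : ℕ) (x : C × K n),
      q (AddCommGroup.DirectLimit.of (fun m => C × K m) (connect (twistMap χ ψ)) n x) =
        AddCommGroup.DirectLimit.of K (connect χ) n x.2) :
    (Function.Injective (fun a : C =>
        AddCommGroup.DirectLimit.of (fun m => C × K m) (connect (twistMap χ ψ)) 0 (a, 0)) ∧
      ∀ y, q y = 0 ↔ ∃ a : C,
        AddCommGroup.DirectLimit.of (fun m => C × K m) (connect (twistMap χ ψ)) 0 (a, 0) = y) ∧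
    ((∃ φ : AddCommGroup.DirectLimit K (connect χ) →+
          AddCommGroup.DirectLimit (fun n => C × K n) (connect (twistMap χ ψ)),
        q.comp φ = AddMonoidHom.id (AddCommGroup.DirectLimit K (connect χ))) →
      ∃ h : ∀ n, K n →+ C, ∀ (n : ℕ) (b : K n), ψ n b = h n b - h (n + 1) (χ n b)) := by
  have hexact : Function.Exact (limitInl χ ψ) q := limitInl_exact hq
  refine ⟨⟨limitInl_injective χ ψ, hexact⟩, ?_⟩
  rintro ⟨φ, hφ⟩
  obtain ⟨r, hr⟩ := exists_retraction_of_exact_of_section hexact (limitInl_injective χ ψ) hφ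
  exact exists_cobounding_of_retraction hr

end
end
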